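/- Let Γ be a 3-homogeneous access structure on 7 players satisfying monotonicity, no-cloning and no-redundancy, and suppose there exists a pure QSS state for Γ. Then |Γ_min| = 7 and every 2-element subset of {1,…,7} is contained in exactly one set of Γ_min; that is, Γ_min is a Fano plane. -/

import Mathlib

open Finset

/-- Monotonicity of an access structure on `n` players (players = `Fin n`). -/
def Monotonic {n : ℕ} (Γ : Finset (Fin n) → Prop) : Prop :=
  ∀ A B : Finset (Fin n), Γ A → A ⊆ B → Γ B

/-- No-cloning: a set is authorized iff its complement is not. -/
def NoCloning {n : ℕ} (Γ : Finset (Fin n) → Prop) : Prop :=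
  ∀ A : Finset (Fin n), Γ A ↔ ¬ Γ Aᶜ

/-- `A` is a minimal authorized set of `Γ`. -/
def IsMinimal {n : ℕ} (Γ : Finset (Fin n) → Prop) (A : Finset (Fin n)) : Prop :=
  Γ A ∧ ∀ B : Finset (Fin n), B ⊂ A → ¬ Γ B

/-- No-redundancy: every player lies in some minimal authorized set. -/
def NoRedundancy {n : ℕ} (Γ : Finset (Fin n) → Prop) : Prop :=
  ∀ i : Fin n, ∃ A : Finset (Fin n), IsMinimal Γ A ∧ i ∈ A

noncomputable section

/-- Combine an assignment on `A` and one on `Aᶜ` into a full bit string. -/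
def glue {m : ℕ} (A : Finset (Fin m)) (u : {x // x ∈ A} → Fin 2)
    (w : {x // x ∈ Aᶜ} → Fin 2) : Fin m → Fin 2 :=
  fun x => if h : x ∈ A then u ⟨x, h⟩ else w ⟨x, Finset.mem_compl.mpr h⟩

/-- Reduced density matrix of the pure state `ψ` on the qubit positions in `A`:
the partial trace over the positions outside `A` of `ψψ†`. -/
def reducedDensity {m : ℕ} (ψ : (Fin m → Fin 2) → ℂ) (A : Finset (Fin m)) :
    Matrix ({x // x ∈ A} → Fin 2) ({x // x ∈ A} → Fin 2) ℂ :=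
  fun u v => ∑ w : {x // x ∈ Aᶜ} → Fin 2,
    ψ (glue A u w) * (starRingEnd ℂ) (ψ (glue A v w))

/-- The reduction of `ψ` to `A` is maximally mixed, i.e. equals `2^{-|A|} · I`. -/
def MaximallyMixed {m : ℕ} (ψ : (Fin m → Fin 2) → ℂ) (A : Finset (Fin m)) : Prop :=
  reducedDensity ψ A =
    ((2 : ℂ) ^ A.card)⁻¹ •
      (1 : Matrix ({x // x ∈ A} → Fin 2) ({x // x ∈ A} → Fin 2) ℂ)

open Classical in
/-- Von Neumann entropy (natural logarithm): sum of `-λ log λ` over the eigenvalues. -/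
def vnEntropy {ι : Type} [Fintype ι] [DecidableEq ι] (ρ : Matrix ι ι ℂ) : ℝ :=
  if h : ρ.IsHermitian then ∑ i, Real.negMulLog (h.eigenvalues i) else 0

/-- Entropy of the reduction of `ψ` to the set `A` of qubit positions. -/
def Sent {m : ℕ} (ψ : (Fin m → Fin 2) → ℂ) (A : Finset (Fin m)) : ℝ :=
  vnEntropy (reducedDensity ψ A)

/-- The qubit positions (in `{0,1,…,n} = Fin (n+1)`, where `0` is the reference qubit)
of a set of players `A ⊆ Fin n`: player `i` holds position `i.succ`. -/
def posOf {n : ℕ} (A : Finset (Fin n)) : Finset (Fin (n + 1)) := A.image Fin.succ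

/-- `ψ` is a pure QSS state for the access structure `Γ`: a normalized pure state of
`n+1` qubits (position `0` being the reference qubit `R`) satisfying Recoverability
`S(R) + S(A) - S(R ∪ A) = 2 log 2` for authorized `A` and Secrecy
`S(R) + S(B) - S(R ∪ B) = 0` for unauthorized `B`. -/
structure IsPureQSSState {n : ℕ} (Γ : Finset (Fin n) → Prop)
    (ψ : (Fin (n + 1) → Fin 2) → ℂ) : Prop where
  normalized : ∑ x : Fin (n + 1) → Fin 2, ‖ψ x‖ ^ 2 = 1
  recover : ∀ A : Finset (Fin n), Γ A →
    Sent ψ {0} + Sent ψ (posOf A) - Sent ψ (insert 0 (posOf A)) = 2 * Real.log 2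
  secrecy : ∀ B : Finset (Fin n), ¬ Γ B →
    Sent ψ {0} + Sent ψ (posOf B) - Sent ψ (insert 0 (posOf B)) = 0

end

/-!
Adding one qubit to a set raises the entropy by at most `log 2`, with equality exactly when that
qubit is maximally mixed and decoupled from the set. Comparing entropies of a pure state across
complements, recoverability and secrecy turn these bounds into equalities: every player `i` of a
minimal set `A` is decoupled from `A \ {i}` and from `Aᶜ`, and `S(Aᶜ) = S(A \ {i})`. By
no-redundancy all pairs of players are therefore maximally mixed.

If all pairs of a three-qubit state `ρ` are maximally mixed, then `ρ` plus its spin flip is `1/4`.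
Since the spin flip is positive semidefinite, `ρ ≤ 1/4`, so `S(ρ) ≥ 2 log 2`. Now suppose that
minimal sets `P ∪ {a}` and `P ∪ {b}` with `a ≠ b` share the pair `P`, and let `C` be the
remaining three players. Since `b` is decoupled from `C`, we get
`2 log 2 ≥ S(P) = S(C ∪ {b}) = log 2 + S(C) ≥ 3 log 2`, a contradiction. So no pair lies in two
minimal sets.

By no-cloning, minimal sets meet pairwise, and every triple that is not minimal misses some minimal
set. That set is unique, since two triples in the four-element complement share a pair. Each minimal
set misses four triples, so `|Γ_min| + 4 |Γ_min| = 35`, and the `7 * 3` pairs covered by minimal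
sets are all `21` pairs.
-/

open Matrix Kronecker ComplexOrder Real

section Entropy

variable {ι κ : Type} [Fintype ι] [DecidableEq ι] [Fintype κ] [DecidableEq κ]

theorem vnEntropy_eq_sum_roots_charpoly {ρ : Matrix ι ι ℂ} (hρ : ρ.IsHermitian) :
    vnEntropy ρ = (ρ.charpoly.roots.map fun z => negMulLog z.re).sum := by
  rw [vnEntropy, dif_pos hρ, hρ.roots_charpoly_eq_eigenvalues, Multiset.map_map, Finset.sum]
  simp only [Function.comp_def, RCLike.ofReal_eq_complex_ofReal, Complex.ofReal_re]

theorem vnEntropy_eq_of_charpoly_eq {ρ : Matrix ι ι ℂ} {σ : Matrix κ κ ℂ}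
    (hρ : ρ.IsHermitian) (hσ : σ.IsHermitian) (h : ρ.charpoly = σ.charpoly) :
    vnEntropy ρ = vnEntropy σ := by
  rw [vnEntropy_eq_sum_roots_charpoly hρ, vnEntropy_eq_sum_roots_charpoly hσ, h]

theorem vnEntropy_diagonal (d : ι → ℝ) :
    vnEntropy (diagonal fun i => (d i : ℂ)) = ∑ i, negMulLog (d i) := by
  have hd : (diagonal fun i => (d i : ℂ)).IsHermitian :=
    isHermitian_diagonal_of_self_adjoint _ <| funext fun i => Complex.conj_ofReal (d i)
  rw [vnEntropy_eq_sum_roots_charpoly hd, charpoly_diagonal,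
    Polynomial.roots_prod _ _ (Finset.prod_ne_zero_iff.2 fun i _ => Polynomial.X_sub_C_ne_zero _),
    Finset.sum]
  simp [-Finset.sum_map_val]

theorem vnEntropy_conjTranspose_mul_mul {ρ U : Matrix ι ι ℂ} (hρ : ρ.IsHermitian)
    (hU : U ∈ unitaryGroup ι ℂ) : vnEntropy (Uᴴ * ρ * U) = vnEntropy ρ := by
  refine vnEntropy_eq_of_charpoly_eq (isHermitian_conjTranspose_mul_mul U hρ) hρ ?_
  rw [charpoly_mul_comm, ← Matrix.mul_assoc, ← star_eq_conjTranspose, mem_unitaryGroup_iff.1 hU,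
    Matrix.one_mul]

theorem vnEntropy_submatrix_equiv {ρ : Matrix ι ι ℂ} (hρ : ρ.IsHermitian) (e : κ ≃ ι) :
    vnEntropy (ρ.submatrix e e) = vnEntropy ρ :=
  vnEntropy_eq_of_charpoly_eq (hρ.submatrix e) hρ (charpoly_reindex e.symm ρ)

theorem vnEntropy_transpose {ρ : Matrix ι ι ℂ} (hρ : ρ.IsHermitian) :
    vnEntropy ρᵀ = vnEntropy ρ :=
  vnEntropy_eq_of_charpoly_eq hρ.transpose hρ (charpoly_transpose ρ)

theorem vnEntropy_mul_conjTranspose_self (M : Matrix ι κ ℂ) :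
    vnEntropy (M * Mᴴ) = vnEntropy (Mᴴ * M) := by
  rw [vnEntropy_eq_sum_roots_charpoly (isHermitian_mul_conjTranspose_self M),
    vnEntropy_eq_sum_roots_charpoly (isHermitian_conjTranspose_mul_self M)]
  have X_pow_mul_charpoly_ne_zero {τ : Type} [Fintype τ] [DecidableEq τ] (n : ℕ)
      (A : Matrix τ τ ℂ) : Polynomial.X ^ n * A.charpoly ≠ 0 :=
    mul_ne_zero (pow_ne_zero _ Polynomial.X_ne_zero) (charpoly_monic A).ne_zero
  -- The two characteristic polynomials differ by a power of `X`, and `negMulLog 0 = 0`.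
  have h := congrArg (fun p : Polynomial ℂ => (p.roots.map fun z => negMulLog z.re).sum)
    (charpoly_mul_comm' M Mᴴ)
  rw [Polynomial.roots_mul (X_pow_mul_charpoly_ne_zero _ _),
    Polynomial.roots_mul (X_pow_mul_charpoly_ne_zero _ _)] at h
  simpa [Multiset.map_nsmul, Multiset.sum_nsmul] using h

theorem conjTranspose_eigenvectorUnitary_mul_mul {ρ : Matrix ι ι ℂ} (hρ : ρ.IsHermitian) :
    hρ.eigenvectorUnitary.1ᴴ * ρ * hρ.eigenvectorUnitary.1 =
      diagonal fun i => (hρ.eigenvalues i : ℂ) := by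
  simpa [Unitary.conjStarAlgAut_apply, star_eq_conjTranspose, Function.comp_def] using
    hρ.conjStarAlgAut_star_eigenvectorUnitary

theorem trace_re_eq_sum_eigenvalues {ρ : Matrix ι ι ℂ} (hρ : ρ.IsHermitian) :
    ρ.trace.re = ∑ i, hρ.eigenvalues i := by
  simp [hρ.trace_eq_sum_eigenvalues]

theorem neg_log_mul_trace_le_vnEntropy {ρ : Matrix ι ι ℂ} (hρ : ρ.PosSemidef) {c : ℝ}
    (hc : ((c : ℂ) • (1 : Matrix ι ι ℂ) - ρ).PosSemidef) :
    -log c * ρ.trace.re ≤ vnEntropy ρ := by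
  set U : Matrix ι ι ℂ := hρ.1.eigenvectorUnitary.1
  have hU : Uᴴ * U = 1 := mem_unitaryGroup_iff'.1 hρ.1.eigenvectorUnitary.2
  have eigenvalues_le (i : ι) : hρ.1.eigenvalues i ≤ c := by
    have h := (hc.conjTranspose_mul_mul_same U).diag_nonneg (i := i)
    rw [Matrix.mul_sub, Matrix.sub_mul, conjTranspose_eigenvectorUnitary_mul_mul,
      Matrix.mul_smul, Matrix.smul_mul, Matrix.mul_one, hU] at h
    simpa [Complex.le_def] using h
  rw [vnEntropy, dif_pos hρ.1, trace_re_eq_sum_eigenvalues hρ.1, Finset.mul_sum]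
  refine Finset.sum_le_sum fun i _ => ?_
  rcases (hρ.eigenvalues_nonneg i).eq_or_lt with h0 | hpos
  · simp [← h0]
  · have := mul_le_mul_of_nonneg_left (log_le_log hpos (eigenvalues_le i)) hpos.le
    rw [negMulLog]
    linarith

end Entropy

section Pinching

variable {ι : Type} [Fintype ι] [DecidableEq ι]

theorem sum_normSq_row_of_mem_unitaryGroup {U : Matrix ι ι ℂ} (hU : U ∈ unitaryGroup ι ℂ)
    (j : ι) : ∑ i, Complex.normSq (U j i) = 1 := by
  have h := congrFun₂ (mem_unitaryGroup_iff.1 hU) j j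
  simp only [mul_apply, star_apply, RCLike.star_def, Complex.mul_conj, one_apply_eq] at h
  exact_mod_cast h

theorem sum_normSq_col_of_mem_unitaryGroup {U : Matrix ι ι ℂ} (hU : U ∈ unitaryGroup ι ℂ)
    (i : ι) : ∑ j, Complex.normSq (U j i) = 1 := by
  simpa [star_apply] using sum_normSq_row_of_mem_unitaryGroup (Unitary.star_mem hU) i

theorem diag_re_eq_sum_normSq_mul_eigenvalues {M : Matrix ι ι ℂ} (hM : M.IsHermitian) (j : ι) :
    (M j j).re =
      ∑ i, Complex.normSq (hM.eigenvectorUnitary.1 j i) * hM.eigenvalues i := by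
  have h : M j j =
      ((∑ i, Complex.normSq (hM.eigenvectorUnitary.1 j i) * hM.eigenvalues i : ℝ) : ℂ) := by
    conv_lhs => rw [hM.spectral_theorem, Unitary.conjStarAlgAut_apply, mul_apply]
    simp only [mul_diagonal, star_apply, RCLike.star_def, Complex.ofReal_sum, Complex.ofReal_mul,
      ← Complex.mul_conj]
    exact Finset.sum_congr rfl fun i _ => mul_right_comm _ _ _
  rw [h, Complex.ofReal_re]

theorem vnEntropy_eq_sum_sum_normSq_mul {M : Matrix ι ι ℂ} (hM : M.IsHermitian) :
    vnEntropy M = ∑ j, ∑ i, Complex.normSq (hM.eigenvectorUnitary.1 j i) *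
      negMulLog (hM.eigenvalues i) := by
  simp only [vnEntropy, dif_pos hM]
  rw [Finset.sum_comm]
  simp only [← Finset.sum_mul, sum_normSq_col_of_mem_unitaryGroup hM.eigenvectorUnitary.2, one_mul]

theorem sum_normSq_mul_negMulLog_le {M : Matrix ι ι ℂ} (hM : M.PosSemidef) (j : ι) :
    ∑ i, Complex.normSq (hM.1.eigenvectorUnitary.1 j i) * negMulLog (hM.1.eigenvalues i) ≤
      negMulLog (M j j).re := by
  rw [diag_re_eq_sum_normSq_mul_eigenvalues hM.1]
  exact concaveOn_negMulLog.le_map_sum (fun i _ => Complex.normSq_nonneg _)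
    (sum_normSq_row_of_mem_unitaryGroup hM.1.eigenvectorUnitary.2 j)
    fun i _ => hM.eigenvalues_nonneg i

theorem eigenvalues_eq_diag_of_sum_eq {M : Matrix ι ι ℂ} (hM : M.PosSemidef) {i j : ι}
    (h : ∑ i, Complex.normSq (hM.1.eigenvectorUnitary.1 j i) * negMulLog (hM.1.eigenvalues i) =
      negMulLog (M j j).re)
    (hij : hM.1.eigenvectorUnitary.1 j i ≠ 0) : hM.1.eigenvalues i = (M j j).re := by
  rw [diag_re_eq_sum_normSq_mul_eigenvalues hM.1] at h ⊢
  exact (strictConcaveOn_negMulLog.map_sum_eq_iff' (fun i _ => Complex.normSq_nonneg _)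
    (sum_normSq_row_of_mem_unitaryGroup hM.1.eigenvectorUnitary.2 j)
    fun i _ => hM.eigenvalues_nonneg i).1 h.symm i (Finset.mem_univ i)
    (by simpa only [ne_eq, Complex.normSq_eq_zero] using hij)

theorem vnEntropy_le_sum_negMulLog_diag {M : Matrix ι ι ℂ} (hM : M.PosSemidef) :
    vnEntropy M ≤ ∑ j, negMulLog (M j j).re := by
  rw [vnEntropy_eq_sum_sum_normSq_mul hM.1]
  exact Finset.sum_le_sum fun j _ => sum_normSq_mul_negMulLog_le hM j

theorem eq_diagonal_of_vnEntropy_eq {M : Matrix ι ι ℂ} (hM : M.PosSemidef)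
    (h : vnEntropy M = ∑ j, negMulLog (M j j).re) :
    M = diagonal fun j => ((M j j).re : ℂ) := by
  set U : Matrix ι ι ℂ := hM.1.eigenvectorUnitary.1 with hU
  set D : Matrix ι ι ℂ := diagonal fun j => ((M j j).re : ℂ)
  rw [vnEntropy_eq_sum_sum_normSq_mul hM.1,
    Finset.sum_eq_sum_iff_of_le fun j _ => sum_normSq_mul_negMulLog_le hM j] at h
  have hUD : U * diagonal (fun i => (hM.1.eigenvalues i : ℂ)) = D * U := by
    ext j i
    rw [mul_diagonal, diagonal_mul, mul_comm]
    by_cases hij : U j i = 0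
    · simp [hij]
    · rw [eigenvalues_eq_diag_of_sum_eq hM (h j (Finset.mem_univ j)) hij]
  have hUU : U * Uᴴ = 1 := mem_unitaryGroup_iff.1 hM.1.eigenvectorUnitary.2
  calc M = (U * Uᴴ) * M * (U * Uᴴ) := by rw [hUU, Matrix.one_mul, Matrix.mul_one]
    _ = U * (Uᴴ * M * U) * Uᴴ := by simp only [Matrix.mul_assoc]
    _ = D := by
      rw [hU, conjTranspose_eigenvectorUnitary_mul_mul, ← hU, hUD, Matrix.mul_assoc, hUU,
        Matrix.mul_one]

end Pinching

section PartialTrace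

variable {κ ι : Type} [Fintype κ]

theorem card_mul_negMulLog_div_card [Nonempty κ] (x : ℝ) :
    Fintype.card κ * negMulLog (x / Fintype.card κ) = x * log (Fintype.card κ) + negMulLog x := by
  have hκ : (Fintype.card κ : ℝ) ≠ 0 := Nat.cast_ne_zero.2 Fintype.card_ne_zero
  rcases eq_or_ne x 0 with rfl | hx
  · simp
  · rw [negMulLog, negMulLog, log_div hx hκ]
    field_simp
    ring

theorem sum_negMulLog_le [Nonempty κ] {a : κ → ℝ} (ha : ∀ s, 0 ≤ a s) :
    ∑ s, negMulLog (a s) ≤ (∑ s, a s) * log (Fintype.card κ) + negMulLog (∑ s, a s) := by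
  have hκ : 0 < (Fintype.card κ : ℝ) := Nat.cast_pos.2 Fintype.card_pos
  have h := concaveOn_negMulLog.le_map_sum (t := Finset.univ) (p := a)
    (w := fun _ : κ => (Fintype.card κ : ℝ)⁻¹) (fun _ _ => inv_nonneg.2 hκ.le)
    (by simp [hκ.ne']) fun s _ => ha s
  simp only [smul_eq_mul, ← Finset.mul_sum] at h
  rwa [← card_mul_negMulLog_div_card (κ := κ), div_eq_inv_mul, ← inv_mul_le_iff₀ hκ]

theorem eq_div_card_of_sum_negMulLog_eq [Nonempty κ] {a : κ → ℝ} (ha : ∀ s, 0 ≤ a s)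
    (h : ∑ s, negMulLog (a s) = (∑ s, a s) * log (Fintype.card κ) + negMulLog (∑ s, a s)) (s : κ) :
    a s = (∑ t, a t) / Fintype.card κ := by
  have hκ : 0 < (Fintype.card κ : ℝ) := Nat.cast_pos.2 Fintype.card_pos
  have hiff := strictConcaveOn_negMulLog.map_sum_eq_iff (t := Finset.univ) (p := a)
    (w := fun _ : κ => (Fintype.card κ : ℝ)⁻¹) (fun _ _ => inv_pos.2 hκ)
    (by simp [hκ.ne']) fun s _ => ha s
  simp only [smul_eq_mul, ← Finset.mul_sum] at hiff
  rw [div_eq_inv_mul]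
  refine hiff.1 ?_ s (Finset.mem_univ s)
  rw [h, ← card_mul_negMulLog_div_card (κ := κ), div_eq_inv_mul, inv_mul_cancel_left₀ hκ.ne']

/-- Partial trace of a matrix on a tensor product over the left tensor factor. -/
def partialTraceLeft (ρ : Matrix (κ × ι) (κ × ι) ℂ) : Matrix ι ι ℂ :=
  of fun u v => ∑ s, ρ (s, u) (s, v)

theorem partialTraceLeft_isHermitian {ρ : Matrix (κ × ι) (κ × ι) ℂ} (hρ : ρ.IsHermitian) :
    (partialTraceLeft ρ).IsHermitian :=
  IsHermitian.ext fun u v => by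
    simp only [partialTraceLeft, of_apply, star_sum, hρ.apply]

theorem trace_partialTraceLeft [Fintype ι] (ρ : Matrix (κ × ι) (κ × ι) ℂ) :
    (partialTraceLeft ρ).trace = ρ.trace := by
  simp only [trace, diag_apply, partialTraceLeft, of_apply, Fintype.sum_prod_type_right]

theorem partialTraceLeft_conj_one_kronecker [Fintype ι] [DecidableEq κ]
    (ρ : Matrix (κ × ι) (κ × ι) ℂ) (W : Matrix ι ι ℂ) :
    partialTraceLeft (((1 : Matrix κ κ ℂ) ⊗ₖ W)ᴴ * ρ * ((1 : Matrix κ κ ℂ) ⊗ₖ W)) =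
      Wᴴ * partialTraceLeft ρ * W := by
  ext u v
  simp only [partialTraceLeft, of_apply, mul_apply, conjTranspose_kronecker, conjTranspose_one,
    kroneckerMap_apply, Fintype.sum_prod_type, one_apply, ite_mul, mul_ite, one_mul, zero_mul,
    mul_zero, Finset.sum_ite_irrel, Finset.sum_const_zero, Finset.sum_ite_eq, Finset.sum_ite_eq',
    Finset.mem_univ, if_true, Finset.mul_sum, Finset.sum_mul]
  rw [Finset.sum_comm]
  exact Finset.sum_congr rfl fun v' _ => Finset.sum_comm

theorem one_kronecker_conj_one_kronecker [Fintype ι] [DecidableEq κ] (W σ : Matrix ι ι ℂ) :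
    ((1 : Matrix κ κ ℂ) ⊗ₖ W)ᴴ * ((1 : Matrix κ κ ℂ) ⊗ₖ σ) * ((1 : Matrix κ κ ℂ) ⊗ₖ W) =
      (1 : Matrix κ κ ℂ) ⊗ₖ (Wᴴ * σ * W) := by
  rw [conjTranspose_kronecker, ← mul_kronecker_mul, ← mul_kronecker_mul, conjTranspose_one,
    Matrix.one_mul, Matrix.one_mul]

variable [DecidableEq ι] {ρ : Matrix (κ × ι) (κ × ι) ℂ} {d : ι → ℝ}

theorem sum_diag_re_of_partialTraceLeft_eq_diagonal
    (hd : partialTraceLeft ρ = diagonal fun u => (d u : ℂ)) (u : ι) :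
    ∑ s, (ρ (s, u) (s, u)).re = d u := by
  simpa [partialTraceLeft] using congrArg Complex.re (congrFun₂ hd u u)

theorem sum_negMulLog_diag_le_of_partialTraceLeft_eq_diagonal [Nonempty κ] (hρ : ρ.PosSemidef)
    (hd : partialTraceLeft ρ = diagonal fun u => (d u : ℂ)) (u : ι) :
    ∑ s, negMulLog (ρ (s, u) (s, u)).re ≤ d u * log (Fintype.card κ) + negMulLog (d u) := by
  rw [← sum_diag_re_of_partialTraceLeft_eq_diagonal hd]
  exact sum_negMulLog_le fun s => (Complex.le_def.1 hρ.diag_nonneg).1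

variable [Fintype ι] [DecidableEq κ]

theorem vnEntropy_le_of_partialTraceLeft_eq_diagonal [Nonempty κ] (hρ : ρ.PosSemidef)
    (hd : partialTraceLeft ρ = diagonal fun u => (d u : ℂ)) :
    vnEntropy ρ ≤ ∑ u, (d u * log (Fintype.card κ) + negMulLog (d u)) :=
  (vnEntropy_le_sum_negMulLog_diag hρ).trans <| by
    rw [Fintype.sum_prod_type_right]
    exact Finset.sum_le_sum fun u _ =>
      sum_negMulLog_diag_le_of_partialTraceLeft_eq_diagonal hρ hd u

theorem eq_one_kronecker_of_partialTraceLeft_eq_diagonal [Nonempty κ] (hρ : ρ.PosSemidef)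
    (hd : partialTraceLeft ρ = diagonal fun u => (d u : ℂ))
    (h : vnEntropy ρ = ∑ u, (d u * log (Fintype.card κ) + negMulLog (d u))) :
    ρ = (1 : Matrix κ κ ℂ) ⊗ₖ ((Fintype.card κ : ℂ)⁻¹ • diagonal fun u => (d u : ℂ)) := by
  have hle := vnEntropy_le_sum_negMulLog_diag hρ
  have hfib := sum_negMulLog_diag_le_of_partialTraceLeft_eq_diagonal hρ hd
  have hsum := Finset.sum_le_sum fun u (_ : u ∈ Finset.univ) => hfib u
  rw [Fintype.sum_prod_type_right] at hle
  have hdiag := eq_diagonal_of_vnEntropy_eq hρ <| by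
    rw [Fintype.sum_prod_type_right]
    exact hle.antisymm (hsum.trans_eq h.symm)
  have hfib_eq := (Finset.sum_eq_sum_iff_of_le fun u _ => hfib u).1
    (hsum.antisymm (h.symm.trans_le hle))
  have hentry (s : κ) (u : ι) : (ρ (s, u) (s, u)).re = d u / Fintype.card κ := by
    rw [← sum_diag_re_of_partialTraceLeft_eq_diagonal hd]
    refine eq_div_card_of_sum_negMulLog_eq (a := fun s => (ρ (s, u) (s, u)).re)
      (fun s => (Complex.le_def.1 hρ.diag_nonneg).1) ?_ s
    rw [sum_diag_re_of_partialTraceLeft_eq_diagonal hd]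
    exact hfib_eq u (Finset.mem_univ u)
  rw [hdiag, ← diagonal_smul, ← diagonal_one, diagonal_kronecker_diagonal]
  congr 1
  ext ⟨s, u⟩
  simp [hentry, div_eq_inv_mul]

theorem exists_unitary_partialTraceLeft_conj_eq_diagonal (hρ : ρ.IsHermitian) :
    ∃ W ∈ unitaryGroup ι ℂ,
      partialTraceLeft (((1 : Matrix κ κ ℂ) ⊗ₖ W)ᴴ * ρ * ((1 : Matrix κ κ ℂ) ⊗ₖ W)) =
        diagonal fun u => ((partialTraceLeft_isHermitian hρ).eigenvalues u : ℂ) :=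
  ⟨_, (partialTraceLeft_isHermitian hρ).eigenvectorUnitary.2, by
    rw [partialTraceLeft_conj_one_kronecker, conjTranspose_eigenvectorUnitary_mul_mul]⟩

theorem vnEntropy_conj_one_kronecker (hρ : ρ.IsHermitian) {W : Matrix ι ι ℂ}
    (hW : W ∈ unitaryGroup ι ℂ) :
    vnEntropy (((1 : Matrix κ κ ℂ) ⊗ₖ W)ᴴ * ρ * ((1 : Matrix κ κ ℂ) ⊗ₖ W)) = vnEntropy ρ :=
  vnEntropy_conjTranspose_mul_mul hρ (kronecker_mem_unitary (one_mem _) hW)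

theorem sum_eigenvalues_mul_log_add_negMulLog {σ : Matrix ι ι ℂ} (hσ : σ.IsHermitian) (c : ℝ) :
    ∑ u, (hσ.eigenvalues u * log c + negMulLog (hσ.eigenvalues u)) =
      σ.trace.re * log c + vnEntropy σ := by
  rw [Finset.sum_add_distrib, ← Finset.sum_mul, trace_re_eq_sum_eigenvalues hσ, vnEntropy,
    dif_pos hσ]

theorem vnEntropy_one_kronecker [Nonempty κ] {σ : Matrix ι ι ℂ} (hσ : σ.IsHermitian) :
    vnEntropy ((1 : Matrix κ κ ℂ) ⊗ₖ ((Fintype.card κ : ℂ)⁻¹ • σ)) =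
      σ.trace.re * log (Fintype.card κ) + vnEntropy σ := by
  have hκσ : ((1 : Matrix κ κ ℂ) ⊗ₖ ((Fintype.card κ : ℂ)⁻¹ • σ)).IsHermitian := by
    rw [IsHermitian, conjTranspose_kronecker, conjTranspose_smul, hσ, conjTranspose_one]
    simp
  have hdiag : (1 : Matrix κ κ ℂ) ⊗ₖ
        ((Fintype.card κ : ℂ)⁻¹ • diagonal fun u => (hσ.eigenvalues u : ℂ)) =
      diagonal fun p : κ × ι => ((hσ.eigenvalues p.2 / Fintype.card κ : ℝ) : ℂ) := by
    rw [← diagonal_smul, ← diagonal_one, diagonal_kronecker_diagonal]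
    congr 1
    ext p
    simp [div_eq_inv_mul]
  rw [← vnEntropy_conj_one_kronecker hκσ hσ.eigenvectorUnitary.2, one_kronecker_conj_one_kronecker,
    Matrix.mul_smul, Matrix.smul_mul, conjTranspose_eigenvectorUnitary_mul_mul, hdiag,
    vnEntropy_diagonal, Fintype.sum_prod_type_right, ← sum_eigenvalues_mul_log_add_negMulLog hσ]
  simp only [Finset.sum_const, Finset.card_univ, nsmul_eq_mul, card_mul_negMulLog_div_card]

theorem vnEntropy_le_vnEntropy_partialTraceLeft [Nonempty κ] (hρ : ρ.PosSemidef) :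
    vnEntropy ρ ≤ ρ.trace.re * log (Fintype.card κ) + vnEntropy (partialTraceLeft ρ) := by
  obtain ⟨W, hW, hdiag⟩ := exists_unitary_partialTraceLeft_conj_eq_diagonal hρ.1
  rw [← trace_partialTraceLeft,
    ← sum_eigenvalues_mul_log_add_negMulLog (partialTraceLeft_isHermitian hρ.1),
    ← vnEntropy_conj_one_kronecker hρ.1 hW]
  exact vnEntropy_le_of_partialTraceLeft_eq_diagonal (hρ.conjTranspose_mul_mul_same _) hdiag

theorem vnEntropy_eq_vnEntropy_partialTraceLeft_iff [Nonempty κ] (hρ : ρ.PosSemidef) :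
    vnEntropy ρ = ρ.trace.re * log (Fintype.card κ) + vnEntropy (partialTraceLeft ρ) ↔
      ρ = (1 : Matrix κ κ ℂ) ⊗ₖ ((Fintype.card κ : ℂ)⁻¹ • partialTraceLeft ρ) := by
  have hσ := partialTraceLeft_isHermitian hρ.1
  rw [← trace_partialTraceLeft]
  refine ⟨fun h => ?_, fun h => ?_⟩
  · obtain ⟨W, hW, hdiag⟩ := exists_unitary_partialTraceLeft_conj_eq_diagonal hρ.1
    set V := (1 : Matrix κ κ ℂ) ⊗ₖ W
    have hV : IsUnit V := (Unitary.toUnits ⟨V, kronecker_mem_unitary (one_mem _) hW⟩).isUnit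
    have hVρ : Vᴴ * ρ * V =
        Vᴴ * ((1 : Matrix κ κ ℂ) ⊗ₖ ((Fintype.card κ : ℂ)⁻¹ • partialTraceLeft ρ)) * V := by
      rw [one_kronecker_conj_one_kronecker, Matrix.mul_smul, Matrix.smul_mul,
        ← partialTraceLeft_conj_one_kronecker, hdiag]
      refine eq_one_kronecker_of_partialTraceLeft_eq_diagonal
        (hρ.conjTranspose_mul_mul_same _) hdiag ?_
      rw [vnEntropy_conj_one_kronecker hρ.1 hW, h, sum_eigenvalues_mul_log_add_negMulLog]
    exact hV.star.mul_left_cancel (hV.mul_right_cancel hVρ)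
  · rw [← vnEntropy_one_kronecker (κ := κ) hσ, ← h]

end PartialTrace

section SpinFlip

variable {ι : Type}

theorem piecewise_add_one_eq_add_one [DecidableEq ι] {T : Finset ι} {u v : ι → Fin 2}
    (hT : ∀ i, i ∈ T ↔ u i = v i) : T.piecewise (u + 1) u = v + 1 := by
  have eq_add_one_of_ne : ∀ a b : Fin 2, a ≠ b → a = b + 1 := by decide
  ext1 i
  by_cases h : u i = v i
  · simp [Finset.piecewise, hT, h]
  · simpa [Finset.piecewise, hT, h] using eq_add_one_of_ne _ _ h

variable [Fintype ι]

/-- The sign `(-1)^|u|` of the bit string `u`, where `|u|` is the number of ones of `u`. -/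
def bitSign (u : ι → Fin 2) : ℂ := ∏ i, (-1) ^ (u i : ℕ)

/-- The spin flip `Y^{⊗ι} ρᵀ Y^{⊗ι}` of a matrix `ρ` on the qubits `ι`, where `Y` is the Pauli
matrix. Adding `1` to a string of elements of `Fin 2` flips all its bits. -/
def spinFlip (ρ : Matrix (ι → Fin 2) (ι → Fin 2) ℂ) : Matrix (ι → Fin 2) (ι → Fin 2) ℂ :=
  of fun u v => bitSign u * bitSign v * ρ (v + 1) (u + 1)

theorem star_bitSign (u : ι → Fin 2) : star (bitSign u) = bitSign u := by
  simp [bitSign]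

theorem posSemidef_spinFlip {ρ : Matrix (ι → Fin 2) (ι → Fin 2) ℂ}
    (hρ : ρ.PosSemidef) : (spinFlip ρ).PosSemidef := by
  classical
  have h : spinFlip ρ = (diagonal bitSign)ᴴ * ρᵀ.submatrix (· + 1) (· + 1) * diagonal bitSign := by
    ext u v
    rw [diagonal_conjTranspose, mul_diagonal, diagonal_mul, Pi.star_apply, star_bitSign]
    exact mul_right_comm _ _ _
  rw [h]
  exact (hρ.transpose.submatrix _).conjTranspose_mul_mul_same _

theorem bitSign_mul_bitSign (u v : ι → Fin 2) :
    bitSign u * bitSign v = ∏ i, if u i = v i then 1 else -1 := by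
  have bit_mul (a b : Fin 2) :
      (-1 : ℂ) ^ (a : ℕ) * (-1) ^ (b : ℕ) = if a = b then 1 else -1 := by
    fin_cases a <;> fin_cases b <;> simp
  rw [bitSign, bitSign, ← Finset.prod_mul_distrib]
  exact Finset.prod_congr rfl fun i _ => bit_mul _ _

theorem neg_one_pow_card_filter_eq (hodd : Odd (Fintype.card ι)) (u v : ι → Fin 2) :
    (-1 : ℂ) ^ #{i | u i = v i} = -(bitSign u * bitSign v) := by
  calc (-1 : ℂ) ^ #{i | u i = v i} = ∏ i, if u i = v i then -1 else 1 := by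
        rw [Finset.prod_ite, Finset.prod_const, Finset.prod_const_one, mul_one]
    _ = ∏ i, -1 * if u i = v i then 1 else -1 :=
        Finset.prod_congr rfl fun i _ => by split_ifs <;> norm_num
    _ = -(bitSign u * bitSign v) := by
        rw [Finset.prod_mul_distrib, Finset.prod_const, Finset.card_univ, hodd.neg_one_pow,
          neg_one_mul, bitSign_mul_bitSign]

variable [DecidableEq ι] {ρ : Matrix (ι → Fin 2) (ι → Fin 2) ℂ} {c : ℂ}

theorem apply_eq_neg_one_pow_mul_piecewise_add
    (hρ : ∀ i u v, u i = v i → ρ u v +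
      ρ (Function.update u i (u i + 1)) (Function.update v i (v i + 1)) = if u = v then c else 0)
    {u v : ι → Fin 2} (T : Finset ι) (hT : ∀ i ∈ T, u i = v i) :
    ρ u v = (-1) ^ #T * ρ (T.piecewise (u + 1) u) (T.piecewise (v + 1) v) +
      if u = v ∧ Odd #T then c else 0 := by
  induction T using Finset.induction_on with
  | empty => simp
  | insert i T hi ih =>
    have heq : T.piecewise (u + 1) u = T.piecewise (v + 1) v ↔ u = v := by
      refine ⟨fun h => funext fun j => ?_, fun h => h ▸ rfl⟩
      by_cases hj : j ∈ T
      · exact hT j (mem_insert_of_mem hj)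
      · simpa [hj] using congrFun h j
    have hstep := hρ i (T.piecewise (u + 1) u) (T.piecewise (v + 1) v)
      (by simpa [hi] using hT i (mem_insert_self i T))
    simp only [heq, Finset.piecewise_eq_of_notMem _ _ _ hi] at hstep
    rw [ih fun j hj => hT j (mem_insert_of_mem hj), Finset.piecewise_insert,
      Finset.piecewise_insert, Finset.card_insert_of_notMem hi, eq_sub_of_add_eq hstep, pow_succ]
    rcases Nat.even_or_odd #T with hT | hT <;> by_cases huv : u = v
    all_goals
      simp [huv, hT, hT.neg_one_pow, hT.add_one, Nat.not_odd_iff_even, sub_eq_add_neg,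
        add_comm]

theorem add_spinFlip_eq (hodd : Odd (Fintype.card ι))
    (hρ : ∀ i u v, u i = v i → ρ u v +
      ρ (Function.update u i (u i + 1)) (Function.update v i (v i + 1)) = if u = v then c else 0) :
    ρ + spinFlip ρ = c • (1 : Matrix (ι → Fin 2) (ι → Fin 2) ℂ) := by
  ext u v
  have hmem (i : ι) : i ∈ ({i | u i = v i} : Finset ι) ↔ u i = v i :=
    Finset.mem_filter_univ i
  have h := apply_eq_neg_one_pow_mul_piecewise_add hρ _ fun i => (hmem i).1
  have hcond : u = v ∧ Odd #{i | u i = v i} ↔ u = v := by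
    refine and_iff_left_of_imp ?_
    rintro rfl
    simpa using hodd
  rw [piecewise_add_one_eq_add_one hmem,
    piecewise_add_one_eq_add_one fun i => (hmem i).trans eq_comm, neg_one_pow_card_filter_eq hodd,
    if_congr hcond rfl rfl] at h
  rw [Matrix.add_apply, h, spinFlip, of_apply, Matrix.smul_apply, one_apply, smul_eq_mul, mul_ite,
    mul_one, mul_zero]
  ring

end SpinFlip

section PureState

variable {m : ℕ} (ψ : (Fin m → Fin 2) → ℂ)

/-- The amplitudes of `ψ` as a matrix indexed by the bit strings on `A` and on `Aᶜ`. -/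
def amplitudeMatrix (A : Finset (Fin m)) : Matrix (A → Fin 2) (↥Aᶜ → Fin 2) ℂ :=
  of fun u w => ψ (glue A u w)

theorem reducedDensity_eq_mul_conjTranspose (A : Finset (Fin m)) :
    reducedDensity ψ A = amplitudeMatrix ψ A * (amplitudeMatrix ψ A)ᴴ := by
  ext u v
  rw [mul_apply]
  rfl

theorem posSemidef_reducedDensity (A : Finset (Fin m)) : (reducedDensity ψ A).PosSemidef := by
  rw [reducedDensity_eq_mul_conjTranspose]
  exact posSemidef_self_mul_conjTranspose _

theorem reducedDensity_compl (A : Finset (Fin m)) :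
    reducedDensity ψ Aᶜ = ((amplitudeMatrix ψ A)ᴴ * amplitudeMatrix ψ A)ᵀ := by
  have glue_compl (u : A → Fin 2) (w : ↥Aᶜ → Fin 2) :
      glue Aᶜ w (fun j => u ⟨j, by simpa using j.2⟩) = glue A u w := by
    ext1 i
    by_cases hi : i ∈ A <;> simp [glue, hi]
  ext u v
  rw [transpose_apply, mul_apply]
  refine (Fintype.sum_equiv (Equiv.arrowCongr
    (Equiv.subtypeEquivRight fun _ => by simp) (Equiv.refl _)) _ _ fun w => ?_).symm
  rw [conjTranspose_apply, amplitudeMatrix, of_apply, of_apply, ← glue_compl, ← glue_compl,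
    mul_comm]
  rfl

theorem sent_compl (A : Finset (Fin m)) : Sent ψ Aᶜ = Sent ψ A := by
  rw [Sent, Sent, reducedDensity_compl, reducedDensity_eq_mul_conjTranspose,
    vnEntropy_transpose (isHermitian_conjTranspose_mul_self _), vnEntropy_mul_conjTranspose_self]

/-- `glue` as a bijection. -/
def glueEquiv (A : Finset (Fin m)) : (A → Fin 2) × (↥Aᶜ → Fin 2) ≃ (Fin m → Fin 2) where
  toFun p := glue A p.1 p.2
  invFun z := (A.restrict z, Aᶜ.restrict z)
  left_inv p := by
    ext i : 2
    · simp [glue]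
    · simp [glue, Finset.mem_compl.1 i.2]
  right_inv z := by
    ext1 i
    by_cases hi : i ∈ A <;> simp [glue, hi]

theorem trace_reducedDensity (A : Finset (Fin m)) :
    (reducedDensity ψ A).trace = ((∑ x, ‖ψ x‖ ^ 2 : ℝ) : ℂ) := by
  have h : (reducedDensity ψ A).trace = ∑ x, ψ x * (starRingEnd ℂ) (ψ x) := by
    rw [← (glueEquiv A).sum_comp, Fintype.sum_prod_type]
    rfl
  simp [h, Complex.mul_conj, Complex.normSq_eq_norm_sq]

/-- The entries of `reducedDensity ψ A`, indexed by bit strings on all positions of which only the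
bits in `A` matter. -/
def reducedKernel (A : Finset (Fin m)) (x y : Fin m → Fin 2) : ℂ :=
  reducedDensity ψ A (A.restrict x) (A.restrict y)

theorem restrict_surjective (A : Finset (Fin m)) :
    Function.Surjective (A.restrict : (Fin m → Fin 2) → A → Fin 2) :=
  Subtype.surjective_restrict (· ∈ A)

theorem reducedKernel_eq_sum (A : Finset (Fin m)) (x y : Fin m → Fin 2) :
    reducedKernel ψ A x y = ∑ z, if A.restrict z = A.restrict x then
      ψ z * (starRingEnd ℂ) (ψ (A.piecewise y z)) else 0 := by
  have restrict_glue (u : A → Fin 2) (w : ↥Aᶜ → Fin 2) : A.restrict (glue A u w) = u :=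
    congrArg Prod.fst ((glueEquiv A).symm_apply_apply (u, w))
  have piecewise_glue (u : A → Fin 2) (w : ↥Aᶜ → Fin 2) :
      A.piecewise y (glue A u w) = glue A (A.restrict y) w := by
    ext1 i
    by_cases hi : i ∈ A <;> simp [glue, hi]
  rw [← (glueEquiv A).sum_comp, Fintype.sum_prod_type]
  simp only [glueEquiv, Equiv.coe_fn_mk, restrict_glue, piecewise_glue, Finset.sum_ite_irrel,
    Finset.sum_const_zero, Finset.sum_ite_eq', Finset.mem_univ, if_true]
  rfl

theorem reducedKernel_eq_sum_insert {B : Finset (Fin m)} {i : Fin m} (hi : i ∉ B)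
    (x y : Fin m → Fin 2) :
    reducedKernel ψ B x y =
      ∑ s, reducedKernel ψ (insert i B) (Function.update x i s) (Function.update y i s) := by
  have restrict_iff (z : Fin m → Fin 2) (s : Fin 2) :
      (insert i B).restrict z = (insert i B).restrict (Function.update x i s) ↔
        s = z i ∧ B.restrict z = B.restrict x := by
    simp only [funext_iff, Finset.restrict, Subtype.forall, Finset.forall_mem_insert,
      Function.update_self, eq_comm (a := z i)]
    refine and_congr_right fun _ => forall₂_congr fun j hj => ?_
    rw [Function.update_of_ne (ne_of_mem_of_not_mem hj hi)]
  have piecewise_eq (z : Fin m → Fin 2) :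
      (insert i B).piecewise (Function.update y i (z i)) z = B.piecewise y z := by
    ext1 j
    rcases eq_or_ne j i with rfl | hj
    · simp [hi]
    · simp [Finset.piecewise, hj]
  simp only [reducedKernel_eq_sum, restrict_iff, ite_and]
  rw [Finset.sum_comm]
  simp only [Finset.sum_ite_eq', Finset.mem_univ, if_true, piecewise_eq]

theorem reducedKernel_congr {A : Finset (Fin m)} {x y x' y' : Fin m → Fin 2}
    (hx : ∀ i ∈ A, x i = x' i) (hy : ∀ i ∈ A, y i = y' i) :
    reducedKernel ψ A x y = reducedKernel ψ A x' y' := by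
  have h1 : A.restrict x = A.restrict x' := funext fun i => hx i i.2
  have h2 : A.restrict y = A.restrict y' := funext fun i => hy i i.2
  rw [reducedKernel, reducedKernel, h1, h2]

theorem maximallyMixed_iff_reducedKernel {A : Finset (Fin m)} :
    MaximallyMixed ψ A ↔ ∀ x y, reducedKernel ψ A x y =
      if A.restrict x = A.restrict y then ((2 : ℂ) ^ #A)⁻¹ else 0 := by
  rw [MaximallyMixed, ← Matrix.ext_iff, (restrict_surjective A).forall₂]
  simp only [reducedKernel, Matrix.smul_apply, one_apply, smul_eq_mul, mul_ite, mul_one, mul_zero]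

variable {ψ}

theorem maximallyMixed_empty (hψ : ∑ x, ‖ψ x‖ ^ 2 = 1) : MaximallyMixed ψ ∅ := by
  have h := trace_reducedDensity ψ ∅
  rw [hψ, Matrix.trace, Fintype.sum_unique, diag_apply] at h
  ext u v
  obtain rfl := Subsingleton.elim v u
  obtain rfl := Subsingleton.elim v default
  exact h.trans (by simp)

theorem sent_empty (hψ : ∑ x, ‖ψ x‖ ^ 2 = 1) : Sent ψ ∅ = 0 := by
  have h : reducedDensity ψ ∅ = diagonal fun _ => ((1 : ℝ) : ℂ) := by
    simpa [MaximallyMixed] using maximallyMixed_empty hψ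
  rw [Sent, h, vnEntropy_diagonal]
  simp

/-- Qubit `i` is maximally mixed and uncorrelated with the qubits in `B`, that is,
`ρ_{i ∪ B} = (1/2) ⊗ ρ_B`. -/
def Decoupled (ψ : (Fin m → Fin 2) → ℂ) (i : Fin m) (B : Finset (Fin m)) : Prop :=
  ∀ x y, reducedKernel ψ (insert i B) x y =
    if x i = y i then (2 : ℂ)⁻¹ * reducedKernel ψ B x y else 0

theorem Decoupled.of_insert {i j : Fin m} {B : Finset (Fin m)} (h : Decoupled ψ i (insert j B))
    (hij : i ≠ j) (hj : j ∉ B) : Decoupled ψ i B := by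
  intro x y
  have hj' : j ∉ insert i B := by simp [hij.symm, hj]
  rw [reducedKernel_eq_sum_insert ψ hj', reducedKernel_eq_sum_insert ψ hj, Finset.insert_comm]
  simp only [h _ _, Function.update_of_ne hij, Finset.sum_ite_irrel, Finset.sum_const_zero,
    Finset.mul_sum]

theorem Decoupled.mono {i : Fin m} {B C : Finset (Fin m)} (h : Decoupled ψ i B) (hi : i ∉ B)
    (hC : C ⊆ B) : Decoupled ψ i C := by
  induction B using Finset.strongInduction with
  | H B ih =>
    rcases hC.eq_or_ssubset with rfl | hCB
    · exact h
    · obtain ⟨j, hj, hjC⟩ := Finset.exists_of_ssubset hCB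
      have hB : Decoupled ψ i (B.erase j) :=
        Decoupled.of_insert (by rwa [Finset.insert_erase hj]) (ne_of_mem_of_not_mem hj hi).symm
          (Finset.notMem_erase j B)
      exact ih _ (Finset.erase_ssubset hj) hB (fun hi' => hi (Finset.mem_of_mem_erase hi'))
        (Finset.subset_erase.2 ⟨hC, hjC⟩)

theorem Decoupled.maximallyMixed_insert {i : Fin m} {B : Finset (Fin m)} (h : Decoupled ψ i B)
    (hi : i ∉ B) (hB : MaximallyMixed ψ B) : MaximallyMixed ψ (insert i B) := by
  rw [maximallyMixed_iff_reducedKernel] at hB ⊢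
  intro x y
  have restrict_iff : (insert i B).restrict x = (insert i B).restrict y ↔
      x i = y i ∧ B.restrict x = B.restrict y := by
    simp only [funext_iff, Finset.restrict, Subtype.forall, Finset.forall_mem_insert]
  simp only [h x y, hB x y, restrict_iff, ite_and, mul_ite, mul_zero,
    Finset.card_insert_of_notMem hi, pow_succ', mul_inv]

end PureState

section Insert

variable {m : ℕ} {B : Finset (Fin m)} {i : Fin m}

/-- A bit string on `insert i B` is a bit at `i` together with a bit string on `B`. -/
def insertEquiv (hi : i ∉ B) : Fin 2 × (B → Fin 2) ≃ (↥(insert i B) → Fin 2) where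
  toFun p j := if h : j.1 ∈ B then p.2 ⟨j, h⟩ else p.1
  invFun w := (w ⟨i, mem_insert_self i B⟩, fun j => w ⟨j, mem_insert_of_mem j.2⟩)
  left_inv p := by simp [hi]
  right_inv w := by
    ext1 ⟨j, hj⟩
    by_cases h : j ∈ B
    · simp [h]
    · obtain rfl := (Finset.mem_insert.1 hj).resolve_right h
      simp [h]

theorem insertEquiv_restrict (hi : i ∉ B) (s : Fin 2) (x : Fin m → Fin 2) :
    insertEquiv hi (s, B.restrict x) = (insert i B).restrict (Function.update x i s) := by
  rw [← Equiv.eq_symm_apply]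
  ext j : 2
  · simp [insertEquiv]
  · simp [insertEquiv, Function.update_of_ne (ne_of_mem_of_not_mem j.2 hi)]

variable {ψ : (Fin m → Fin 2) → ℂ}

theorem partialTraceLeft_reducedDensity_insert (hi : i ∉ B) :
    partialTraceLeft ((reducedDensity ψ (insert i B)).submatrix (insertEquiv hi) (insertEquiv hi)) =
      reducedDensity ψ B := by
  refine Matrix.ext <| (restrict_surjective B).forall₂.2 fun x y => ?_
  simp only [partialTraceLeft, of_apply, submatrix_apply, insertEquiv_restrict]
  exact (reducedKernel_eq_sum_insert ψ hi x y).symm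

theorem decoupled_iff_eq_one_kronecker (hi : i ∉ B) :
    Decoupled ψ i B ↔
      (reducedDensity ψ (insert i B)).submatrix (insertEquiv hi) (insertEquiv hi) =
        (1 : Matrix (Fin 2) (Fin 2) ℂ) ⊗ₖ ((Fintype.card (Fin 2) : ℂ)⁻¹ • reducedDensity ψ B) := by
  have entry (s t : Fin 2) (x y : Fin m → Fin 2) :
      (reducedDensity ψ (insert i B)).submatrix (insertEquiv hi) (insertEquiv hi)
        (s, B.restrict x) (t, B.restrict y) =
      reducedKernel ψ (insert i B) (Function.update x i s) (Function.update y i t) := by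
    rw [submatrix_apply, insertEquiv_restrict, insertEquiv_restrict, reducedKernel]
  have entry_kronecker (s t : Fin 2) (x y : Fin m → Fin 2) :
      ((1 : Matrix (Fin 2) (Fin 2) ℂ) ⊗ₖ ((Fintype.card (Fin 2) : ℂ)⁻¹ • reducedDensity ψ B))
        (s, B.restrict x) (t, B.restrict y) =
      if s = t then (2 : ℂ)⁻¹ * reducedKernel ψ B x y else 0 := by
    simp [reducedKernel, one_apply]
  refine ⟨fun h => ?_, fun h x y => ?_⟩
  · ext ⟨s, u⟩ ⟨t, v⟩
    obtain ⟨x, rfl⟩ := restrict_surjective B u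
    obtain ⟨y, rfl⟩ := restrict_surjective B v
    have update_eq (z : Fin m → Fin 2) (a : Fin 2) : ∀ j ∈ B, Function.update z i a j = z j :=
      fun j hj => Function.update_of_ne (ne_of_mem_of_not_mem hj hi) _ _
    rw [entry, entry_kronecker, h, Function.update_self, Function.update_self,
      reducedKernel_congr ψ (update_eq x s) (update_eq y t)]
  · rw [← entry_kronecker, ← h, entry, Function.update_eq_self, Function.update_eq_self]

theorem sent_insert_eq_vnEntropy (hi : i ∉ B) :
    Sent ψ (insert i B) =
      vnEntropy ((reducedDensity ψ (insert i B)).submatrix (insertEquiv hi) (insertEquiv hi)) :=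
  (vnEntropy_submatrix_equiv (posSemidef_reducedDensity ψ _).1 _).symm

theorem sent_insert_le (hψ : ∑ x, ‖ψ x‖ ^ 2 = 1) (hi : i ∉ B) :
    Sent ψ (insert i B) ≤ log 2 + Sent ψ B := by
  have h := vnEntropy_le_vnEntropy_partialTraceLeft
    ((posSemidef_reducedDensity ψ (insert i B)).submatrix (insertEquiv hi))
  rw [← trace_partialTraceLeft, partialTraceLeft_reducedDensity_insert, trace_reducedDensity,
    hψ] at h
  rw [sent_insert_eq_vnEntropy hi]
  simpa [Sent] using h

theorem sent_insert_eq_iff_decoupled (hψ : ∑ x, ‖ψ x‖ ^ 2 = 1) (hi : i ∉ B) :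
    Sent ψ (insert i B) = log 2 + Sent ψ B ↔ Decoupled ψ i B := by
  have h := vnEntropy_eq_vnEntropy_partialTraceLeft_iff
    ((posSemidef_reducedDensity ψ (insert i B)).submatrix (insertEquiv hi))
  rw [← trace_partialTraceLeft, partialTraceLeft_reducedDensity_insert, trace_reducedDensity, hψ,
    ← decoupled_iff_eq_one_kronecker] at h
  rw [sent_insert_eq_vnEntropy hi, ← h]
  simp [Sent]

theorem sent_le_card_mul_log (hψ : ∑ x, ‖ψ x‖ ^ 2 = 1) (B : Finset (Fin m)) :
    Sent ψ B ≤ #B * log 2 := by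
  induction B using Finset.induction_on with
  | empty => simp [sent_empty hψ]
  | insert i B hi ih =>
    rw [Finset.card_insert_of_notMem hi, Nat.cast_succ]
    linarith [sent_insert_le hψ hi]

theorem reducedDensity_add_update_add_one (hi : i ∈ B) (hmix : MaximallyMixed ψ (B.erase i))
    {u v : B → Fin 2} (huv : u ⟨i, hi⟩ = v ⟨i, hi⟩) :
    reducedDensity ψ B u v +
      reducedDensity ψ B (Function.update u ⟨i, hi⟩ (u ⟨i, hi⟩ + 1))
        (Function.update v ⟨i, hi⟩ (v ⟨i, hi⟩ + 1)) =
      if u = v then ((2 : ℂ) ^ #(B.erase i))⁻¹ else 0 := by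
  obtain ⟨x, rfl⟩ := restrict_surjective B u
  obtain ⟨y, rfl⟩ := restrict_surjective B v
  replace huv : x i = y i := huv
  have restrict_update (z : Fin m → Fin 2) (s : Fin 2) :
      Function.update (B.restrict z) ⟨i, hi⟩ s = B.restrict (Function.update z i s) :=
    (Function.update_comp_eq_of_injective z Subtype.val_injective ⟨i, hi⟩ s).symm
  have restrict_iff :
      B.restrict x = B.restrict y ↔ (B.erase i).restrict x = (B.erase i).restrict y := by
    conv_lhs => rw [← Finset.insert_erase hi]
    simp only [funext_iff, Finset.restrict, Subtype.forall, Finset.forall_mem_insert, huv, true_and]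
  have sum_fin_two (f : Fin 2 → ℂ) (a : Fin 2) : ∑ s, f s = f a + f (a + 1) := by
    fin_cases a <;> simp [Fin.sum_univ_two, add_comm]
  have hsum := reducedKernel_eq_sum_insert ψ (Finset.notMem_erase i B) x y
  rw [(maximallyMixed_iff_reducedKernel ψ).1 hmix, Finset.insert_erase hi, sum_fin_two _ (x i),
    Function.update_eq_self] at hsum
  nth_rw 1 [huv] at hsum
  rw [Function.update_eq_self] at hsum
  rw [restrict_update, restrict_update, if_congr restrict_iff rfl rfl, hsum]
  simp only [reducedKernel, Finset.restrict, huv]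

theorem mul_log_le_sent_of_maximallyMixed_erase (hψ : ∑ x, ‖ψ x‖ ^ 2 = 1) {k : ℕ} (hk : Even k)
    (hB : #B = k + 1) (hmix : ∀ i ∈ B, MaximallyMixed ψ (B.erase i)) :
    k * log 2 ≤ Sent ψ B := by
  have hρ := posSemidef_reducedDensity ψ B
  have hflip : reducedDensity ψ B + spinFlip (reducedDensity ψ B) = ((2 : ℂ) ^ k)⁻¹ • 1 := by
    refine add_spinFlip_eq (by simpa [hB] using hk.add_one) fun i u v huv => ?_
    simpa [Finset.card_erase_of_mem i.2, hB] using
      reducedDensity_add_update_add_one i.2 (hmix i i.2) huv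
  have hle : ((((2 : ℝ) ^ k)⁻¹ : ℝ) : ℂ) • 1 - reducedDensity ψ B =
      spinFlip (reducedDensity ψ B) := by
    rw [sub_eq_iff_eq_add', hflip]
    push_cast
    rfl
  have h := neg_log_mul_trace_le_vnEntropy hρ (hle ▸ posSemidef_spinFlip hρ)
  rw [trace_reducedDensity, hψ] at h
  simpa [Sent] using h

end Insert

section QuantumSecretSharing

variable {n : ℕ}

theorem posOf_insert (i : Fin n) (A : Finset (Fin n)) :
    posOf (insert i A) = insert i.succ (posOf A) :=
  Finset.image_insert _ _ _

theorem succ_mem_posOf {i : Fin n} {A : Finset (Fin n)} : i.succ ∈ posOf A ↔ i ∈ A := by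
  simp [posOf]

theorem posOf_mono {A B : Finset (Fin n)} (h : A ⊆ B) : posOf A ⊆ posOf B :=
  Finset.image_subset_image h

theorem card_posOf (A : Finset (Fin n)) : #(posOf A) = #A :=
  Finset.card_image_of_injective A (Fin.succ_injective n)

theorem compl_posOf (A : Finset (Fin n)) : (posOf A)ᶜ = insert 0 (posOf Aᶜ) := by
  ext x
  cases x using Fin.cases with
  | zero => simp [posOf]
  | succ i => simp [succ_mem_posOf]

variable {Γ : Finset (Fin n) → Prop} {ψ : (Fin (n + 1) → Fin 2) → ℂ}

theorem sent_insert_zero_posOf (A : Finset (Fin n)) :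
    Sent ψ (insert 0 (posOf A)) = Sent ψ (posOf Aᶜ) := by
  rw [← sent_compl ψ (posOf Aᶜ), compl_posOf, compl_compl]

namespace IsPureQSSState

theorem sent_posOf_eq_log_two_add (hψ : IsPureQSSState Γ ψ) (hnc : NoCloning Γ)
    {A : Finset (Fin n)} (hA : Γ A) : Sent ψ (posOf A) = log 2 + Sent ψ (posOf Aᶜ) := by
  have hrec := hψ.recover A hA
  have hsec := hψ.secrecy Aᶜ ((hnc A).1 hA)
  rw [sent_insert_zero_posOf] at hrec hsec
  rw [compl_compl] at hsec
  linarith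

variable {A : Finset (Fin n)} {i : Fin n}

theorem sent_posOf_insert_compl_eq_log_two_add (hψ : IsPureQSSState Γ ψ) (hnc : NoCloning Γ)
    (hA : IsMinimal Γ A) (hi : i ∈ A) :
    Sent ψ (posOf (insert i Aᶜ)) = log 2 + Sent ψ (posOf (A.erase i)) := by
  have hauth : Γ (insert i Aᶜ) := by
    rw [hnc, Finset.compl_insert, compl_compl]
    exact hA.2 _ (Finset.erase_ssubset hi)
  rw [hψ.sent_posOf_eq_log_two_add hnc hauth, Finset.compl_insert, compl_compl]

theorem sent_posOf_compl_of_isMinimal (hψ : IsPureQSSState Γ ψ) (hnc : NoCloning Γ)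
    (hA : IsMinimal Γ A) (hi : i ∈ A) : Sent ψ (posOf Aᶜ) = Sent ψ (posOf (A.erase i)) := by
  have hA_eq := hψ.sent_posOf_eq_log_two_add hnc hA.1
  have hins_eq := hψ.sent_posOf_insert_compl_eq_log_two_add hnc hA hi
  have hA_le := sent_insert_le hψ.normalized (succ_mem_posOf.not.2 (Finset.notMem_erase i A))
  have hins_le := sent_insert_le hψ.normalized
    (succ_mem_posOf.not.2 fun h => Finset.mem_compl.1 h hi)
  rw [← posOf_insert, Finset.insert_erase hi] at hA_le
  rw [← posOf_insert] at hins_le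
  linarith

theorem decoupled_posOf_erase_of_isMinimal (hψ : IsPureQSSState Γ ψ) (hnc : NoCloning Γ)
    (hA : IsMinimal Γ A) (hi : i ∈ A) : Decoupled ψ i.succ (posOf (A.erase i)) := by
  rw [← sent_insert_eq_iff_decoupled hψ.normalized
      (succ_mem_posOf.not.2 (Finset.notMem_erase i A)),
    ← posOf_insert, Finset.insert_erase hi, hψ.sent_posOf_eq_log_two_add hnc hA.1,
    hψ.sent_posOf_compl_of_isMinimal hnc hA hi]

theorem decoupled_posOf_compl_of_isMinimal (hψ : IsPureQSSState Γ ψ) (hnc : NoCloning Γ)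
    (hA : IsMinimal Γ A) (hi : i ∈ A) : Decoupled ψ i.succ (posOf Aᶜ) := by
  rw [← sent_insert_eq_iff_decoupled hψ.normalized
      (succ_mem_posOf.not.2 fun h => Finset.mem_compl.1 h hi),
    ← posOf_insert, hψ.sent_posOf_insert_compl_eq_log_two_add hnc hA hi,
    hψ.sent_posOf_compl_of_isMinimal hnc hA hi]

theorem decoupled_posOf_singleton (hψ : IsPureQSSState Γ ψ) (hnc : NoCloning Γ)
    (hnr : NoRedundancy Γ) {i j : Fin n} (hij : i ≠ j) : Decoupled ψ i.succ (posOf {j}) := by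
  obtain ⟨A, hA, hi⟩ := hnr i
  by_cases hj : j ∈ A
  · exact (hψ.decoupled_posOf_erase_of_isMinimal hnc hA hi).mono
      (succ_mem_posOf.not.2 (Finset.notMem_erase i A))
      (posOf_mono (by simp [hij.symm, hj]))
  · exact (hψ.decoupled_posOf_compl_of_isMinimal hnc hA hi).mono
      (succ_mem_posOf.not.2 fun h => Finset.mem_compl.1 h hi) (posOf_mono (by simpa using hj))

theorem maximallyMixed_posOf_of_card_eq_two (hψ : IsPureQSSState Γ ψ) (hnc : NoCloning Γ)
    (hnr : NoRedundancy Γ) {P : Finset (Fin n)} (hP : #P = 2) : MaximallyMixed ψ (posOf P) := by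
  obtain ⟨i, j, hij, rfl⟩ := Finset.card_eq_two.1 hP
  have hj : Decoupled ψ j.succ ∅ :=
    (hψ.decoupled_posOf_singleton hnc hnr hij.symm).mono
      (succ_mem_posOf.not.2 (Finset.notMem_singleton.2 hij.symm)) (Finset.empty_subset _)
  have hmix : MaximallyMixed ψ (posOf {j}) :=
    hj.maximallyMixed_insert (Finset.notMem_empty _) (maximallyMixed_empty hψ.normalized)
  rw [posOf_insert]
  exact (hψ.decoupled_posOf_singleton hnc hnr hij).maximallyMixed_insert
    (succ_mem_posOf.not.2 (Finset.notMem_singleton.2 hij)) hmix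

theorem two_mul_log_two_le_sent_of_card_eq_three (hψ : IsPureQSSState Γ ψ) (hnc : NoCloning Γ)
    (hnr : NoRedundancy Γ) {C : Finset (Fin n)} (hC : #C = 3) :
    2 * log 2 ≤ Sent ψ (posOf C) := by
  refine mod_cast mul_log_le_sent_of_maximallyMixed_erase hψ.normalized even_two
    ((card_posOf C).trans hC) fun x hx => ?_
  obtain ⟨i, hi, rfl⟩ := Finset.mem_image.1 hx
  rw [posOf, ← Finset.image_erase (Fin.succ_injective n)]
  exact hψ.maximallyMixed_posOf_of_card_eq_two hnc hnr (by rw [Finset.card_erase_of_mem hi, hC])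

theorem sent_posOf_eq_log_two_add_of_isMinimal_insert (hψ : IsPureQSSState Γ ψ)
    (hnc : NoCloning Γ) {P : Finset (Fin n)} {a b : Fin n} (hab : a ≠ b) (haP : a ∉ P)
    (hbP : b ∉ P) (ha : IsMinimal Γ (insert a P)) (hb : IsMinimal Γ (insert b P)) :
    Sent ψ (posOf P) = log 2 + Sent ψ (posOf (insert a (insert b P))ᶜ) := by
  have hb_mem : b ∈ insert b P := Finset.mem_insert_self b P
  have hdec : Decoupled ψ b.succ (posOf (insert a (insert b P))ᶜ) :=
    (hψ.decoupled_posOf_compl_of_isMinimal hnc hb hb_mem).mono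
      (succ_mem_posOf.not.2 fun h => Finset.mem_compl.1 h hb_mem)
      (posOf_mono (Finset.compl_subset_compl.2 (Finset.subset_insert _ _)))
  have hcompl : (insert a P)ᶜ = insert b (insert a (insert b P))ᶜ := by
    rw [Finset.insert_comm, Finset.compl_insert (s := insert a P), Finset.insert_erase]
    simp [hab.symm, hbP]
  have hP := hψ.sent_posOf_compl_of_isMinimal hnc ha (Finset.mem_insert_self a P)
  rw [Finset.erase_insert haP] at hP
  rw [← hP, hcompl, posOf_insert,
    (sent_insert_eq_iff_decoupled hψ.normalized (succ_mem_posOf.not.2 (by simp))).2 hdec]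

theorem eq_of_isMinimal_insert {Γ : Finset (Fin 7) → Prop} {ψ : (Fin (7 + 1) → Fin 2) → ℂ}
    (hψ : IsPureQSSState Γ ψ) (hnc : NoCloning Γ) (hnr : NoRedundancy Γ) {P : Finset (Fin 7)}
    (hP : #P = 2) {a b : Fin 7} (haP : a ∉ P) (hbP : b ∉ P)
    (ha : IsMinimal Γ (insert a P)) (hb : IsMinimal Γ (insert b P)) : a = b := by
  by_contra hab
  have hcard : #(insert a (insert b P))ᶜ = 3 := by
    rw [Finset.card_compl, Finset.card_insert_of_notMem (by simp [hab, haP]),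
      Finset.card_insert_of_notMem hbP, hP, Fintype.card_fin]
  have heq := hψ.sent_posOf_eq_log_two_add_of_isMinimal_insert hnc hab haP hbP ha hb
  have hge := hψ.two_mul_log_two_le_sent_of_card_eq_three hnc hnr hcard
  have hle := sent_le_card_mul_log hψ.normalized (posOf P)
  rw [card_posOf, hP, Nat.cast_ofNat] at hle
  linarith [log_pos one_lt_two]

end IsPureQSSState

end QuantumSecretSharing

section Packing

variable {α : Type*} {k : ℕ} {𝓑 : Finset (Finset α)}

/-- A partial Steiner system: no `k`-set lies in two distinct blocks of `𝓑`. -/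
def IsPacking (k : ℕ) (𝓑 : Finset (Finset α)) : Prop :=
  ∀ P : Finset α, #P = k → ∀ s ∈ 𝓑, ∀ t ∈ 𝓑, P ⊆ s → P ⊆ t → s = t

theorem IsPacking.card_filter_subset_le_one [DecidableEq α] (hpack : IsPacking k 𝓑)
    {P : Finset α} (hP : #P = k) : #{s ∈ 𝓑 | P ⊆ s} ≤ 1 := by
  refine Finset.card_le_one.2 fun s hs t ht => ?_
  rw [Finset.mem_filter] at hs ht
  exact hpack P hP s hs.1 t ht.1 hs.2 ht.2

variable [Fintype α]

theorem IsPacking.eq_of_disjoint (hpack : IsPacking k 𝓑) (hα : Fintype.card α = 2 * k + 3)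
    (hsized : (𝓑 : Set (Finset α)).Sized (k + 1)) {s t u : Finset α} (hs : #s = k + 1)
    (ht : t ∈ 𝓑) (hu : u ∈ 𝓑) (hst : Disjoint s t) (hsu : Disjoint s u) : t = u := by
  classical
  have hunion : #(t ∪ u) ≤ k + 2 := by
    calc #(t ∪ u) ≤ #sᶜ := Finset.card_le_card
          (Finset.union_subset hst.le_compl_left hsu.le_compl_left)
      _ = k + 2 := by rw [Finset.card_compl, hα, hs]; omega
  have hinter : k ≤ #(t ∩ u) := by
    have := Finset.card_union_add_card_inter t u
    rw [hsized ht, hsized hu] at this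
    omega
  obtain ⟨P, hP, hPcard⟩ := Finset.exists_subset_card_eq hinter
  exact hpack P hPcard t ht u hu (hP.trans Finset.inter_subset_left)
    (hP.trans Finset.inter_subset_right)

theorem card_nonblocks_disjoint_block [DecidableEq α] (hα : Fintype.card α = 2 * k + 3)
    (hsized : (𝓑 : Set (Finset α)).Sized (k + 1)) (hint : (𝓑 : Set (Finset α)).Intersecting)
    {t : Finset α} (ht : t ∈ 𝓑) :
    #{s ∈ powersetCard (k + 1) univ \ 𝓑 | Disjoint s t} = k + 2 := by
  have hfilter : {s ∈ powersetCard (k + 1) univ \ 𝓑 | Disjoint s t} = powersetCard (k + 1) tᶜ := by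
    ext s
    have hnot : Disjoint s t → s ∉ 𝓑 := fun h hs => hint hs ht h
    rw [Finset.mem_filter, Finset.mem_sdiff, Finset.mem_powersetCard_univ,
      Finset.mem_powersetCard, Finset.subset_compl_iff_disjoint_right]
    tauto
  have hcompl : #tᶜ = k + 2 := by rw [Finset.card_compl, hα, hsized ht]; omega
  rw [hfilter, Finset.card_powersetCard, hcompl, Nat.choose_succ_self_right]

theorem IsPacking.card_mul_eq_choose [DecidableEq α] (hpack : IsPacking k 𝓑)
    (hα : Fintype.card α = 2 * k + 3)
    (hsized : (𝓑 : Set (Finset α)).Sized (k + 1)) (hint : (𝓑 : Set (Finset α)).Intersecting)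
    (hsat : ∀ s ∉ 𝓑, #s = k + 1 → ∃ t ∈ 𝓑, Disjoint s t) :
    #𝓑 * (k + 3) = (2 * k + 3).choose (k + 1) := by
  have hblocks : 𝓑 ⊆ powersetCard (k + 1) univ := fun s hs =>
    Finset.mem_powersetCard_univ.2 (hsized hs)
  have hone : ∀ s ∈ powersetCard (k + 1) univ \ 𝓑, #{t ∈ 𝓑 | Disjoint s t} = 1 := by
    intro s hs
    rw [Finset.mem_sdiff, Finset.mem_powersetCard_univ] at hs
    obtain ⟨t, ht, hst⟩ := hsat s hs.2 hs.1
    refine Finset.card_eq_one.2 ⟨t, Finset.eq_singleton_iff_unique_mem.2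
      ⟨Finset.mem_filter.2 ⟨ht, hst⟩, fun u hu => ?_⟩⟩
    rw [Finset.mem_filter] at hu
    exact hpack.eq_of_disjoint hα hsized hs.1 hu.1 ht hu.2 hst
  have hcount : #(powersetCard (k + 1) univ \ 𝓑) * 1 = #𝓑 * (k + 2) :=
    Finset.card_mul_eq_card_mul Disjoint hone fun t ht =>
      card_nonblocks_disjoint_block hα hsized hint ht
  rw [mul_one] at hcount
  calc #𝓑 * (k + 3) = #(powersetCard (k + 1) univ \ 𝓑) + #𝓑 := by rw [hcount]; ring
    _ = (2 * k + 3).choose (k + 1) := by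
      rw [Finset.card_sdiff_add_card_eq_card hblocks, Finset.card_powersetCard,
        Finset.card_univ, hα]

theorem sum_card_filter_subset_of_sized [DecidableEq α]
    (hsized : (𝓑 : Set (Finset α)).Sized (k + 1)) :
    ∑ P ∈ powersetCard k univ, #{s ∈ 𝓑 | P ⊆ s} = #𝓑 * (k + 1) := by
  calc ∑ P ∈ powersetCard k univ, #{s ∈ 𝓑 | P ⊆ s}
      = ∑ s ∈ 𝓑, #{P ∈ powersetCard k univ | P ⊆ s} :=
        Finset.sum_card_bipartiteAbove_eq_sum_card_bipartiteBelow fun P s : Finset α => P ⊆ s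
    _ = ∑ s ∈ 𝓑, #(powersetCard k s) := by
        refine Finset.sum_congr rfl fun s _ => congrArg _ (Finset.ext fun P => ?_)
        rw [Finset.mem_filter, Finset.mem_powersetCard_univ, Finset.mem_powersetCard, and_comm]
    _ = #𝓑 * (k + 1) := Finset.sum_const_nat fun s hs => by
        rw [Finset.card_powersetCard, hsized hs, Nat.choose_succ_self_right]

theorem IsPacking.existsUnique_of_card_mul_eq (hpack : IsPacking k 𝓑)
    (hsized : (𝓑 : Set (Finset α)).Sized (k + 1))
    (hcard : #𝓑 * (k + 1) = (Fintype.card α).choose k) {P : Finset α} (hP : #P = k) :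
    ∃! s, s ∈ 𝓑 ∧ P ⊆ s := by
  classical
  have hcount : ∑ Q ∈ powersetCard k univ, #{s ∈ 𝓑 | Q ⊆ s} =
      ∑ _Q ∈ powersetCard k (univ : Finset α), 1 := by
    rw [sum_card_filter_subset_of_sized hsized, hcard, ← Finset.card_eq_sum_ones,
      Finset.card_powersetCard, Finset.card_univ]
  have hle : ∀ Q ∈ powersetCard k univ, #{s ∈ 𝓑 | Q ⊆ s} ≤ 1 := fun Q hQ =>
    hpack.card_filter_subset_le_one (Finset.mem_powersetCard_univ.1 hQ)
  have hone : #{s ∈ 𝓑 | P ⊆ s} = 1 :=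
    (Finset.sum_eq_sum_iff_of_le hle).1 hcount P (Finset.mem_powersetCard_univ.2 hP)
  obtain ⟨s, hs⟩ := Finset.card_eq_one.1 hone
  have hmem (t : Finset α) : t ∈ 𝓑 ∧ P ⊆ t ↔ t = s := by
    rw [← Finset.mem_singleton, ← hs, Finset.mem_filter]
  exact ⟨s, (hmem s).2 rfl, fun t => (hmem t).1⟩

theorem IsPacking.existsUnique [DecidableEq α] (hpack : IsPacking k 𝓑)
    (hα : Fintype.card α = 2 * k + 3)
    (hsized : (𝓑 : Set (Finset α)).Sized (k + 1)) (hint : (𝓑 : Set (Finset α)).Intersecting)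
    (hsat : ∀ s ∉ 𝓑, #s = k + 1 → ∃ t ∈ 𝓑, Disjoint s t) {P : Finset α} (hP : #P = k) :
    ∃! s, s ∈ 𝓑 ∧ P ⊆ s := by
  refine hpack.existsUnique_of_card_mul_eq hsized ?_ hP
  have hchoose := Nat.choose_succ_right_eq (2 * k + 3) k
  rw [← hpack.card_mul_eq_choose hα hsized hint hsat,
    show 2 * k + 3 - k = k + 3 by omega, mul_right_comm] at hchoose
  rw [hα]
  exact Nat.eq_of_mul_eq_mul_right (by omega) hchoose

end Packing

section AccessStructure

variable {n : ℕ} {Γ : Finset (Fin n) → Prop}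

theorem exists_subset_isMinimal {A : Finset (Fin n)} (hA : Γ A) : ∃ B ⊆ A, IsMinimal Γ B := by
  obtain ⟨B, hBA, hB⟩ := exists_minimal_le_of_wellFoundedLT Γ A hA
  exact ⟨B, hBA, hB.prop, fun C hC hΓ => hB.not_lt hΓ hC⟩

theorem IsMinimal.not_disjoint (hmono : Monotonic Γ) (hnc : NoCloning Γ) {A B : Finset (Fin n)}
    (hA : IsMinimal Γ A) (hB : IsMinimal Γ B) : ¬ Disjoint A B := fun h =>
  (hnc A).1 hA.1 (hmono B Aᶜ hB.1 (Finset.subset_compl_iff_disjoint_left.2 h))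

theorem exists_isMinimal_disjoint (hnc : NoCloning Γ) {r : ℕ}
    (hhom : ∀ A, IsMinimal Γ A → #A = r) {A : Finset (Fin n)} (hcard : #A = r)
    (hA : ¬ IsMinimal Γ A) : ∃ B, IsMinimal Γ B ∧ Disjoint A B := by
  have hcompl : Γ Aᶜ := by
    by_contra hcompl
    obtain ⟨B, hBA, hB⟩ := exists_subset_isMinimal ((hnc A).2 hcompl)
    have hBA_eq : B = A := Finset.eq_of_subset_of_card_le hBA (by rw [hcard, hhom B hB])
    exact hA (hBA_eq ▸ hB)
  obtain ⟨B, hBA, hB⟩ := exists_subset_isMinimal hcompl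
  exact ⟨B, hB, Finset.subset_compl_iff_disjoint_left.1 hBA⟩

end AccessStructure

theorem IsPureQSSState.eq_of_isMinimal_of_subset {Γ : Finset (Fin 7) → Prop}
    {ψ : (Fin (7 + 1) → Fin 2) → ℂ} (hψ : IsPureQSSState Γ ψ) (hnc : NoCloning Γ)
    (hnr : NoRedundancy Γ) (hhom : ∀ A, IsMinimal Γ A → #A = 3) {P A B : Finset (Fin 7)}
    (hP : #P = 2) (hA : IsMinimal Γ A) (hB : IsMinimal Γ B) (hPA : P ⊆ A) (hPB : P ⊆ B) :
    A = B := by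
  obtain ⟨a, haP, rfl⟩ := Finset.exists_eq_insert_iff.2 ⟨hPA, by rw [hP, hhom A hA]⟩
  obtain ⟨b, hbP, rfl⟩ := Finset.exists_eq_insert_iff.2 ⟨hPB, by rw [hP, hhom B hB]⟩
  rw [hψ.eq_of_isMinimal_insert hnc hnr hP haP hbP hA hB]

theorem stmt9 (Γ : Finset (Fin 7) → Prop)
    (hmono : Monotonic Γ) (hnc : NoCloning Γ) (hnr : NoRedundancy Γ)
    (hhom : ∀ A : Finset (Fin 7), IsMinimal Γ A → A.card = 3)
    (ψ : (Fin (7 + 1) → Fin 2) → ℂ) (hψ : IsPureQSSState Γ ψ) :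
    {A : Finset (Fin 7) | IsMinimal Γ A}.ncard = 7 ∧
    ∀ P : Finset (Fin 7), P.card = 2 →
      ∃! A : Finset (Fin 7), IsMinimal Γ A ∧ P ⊆ A := by
  classical
  set 𝓑 : Finset (Finset (Fin 7)) := {A | IsMinimal Γ A} with h𝓑
  have mem_blocks (A : Finset (Fin 7)) : A ∈ 𝓑 ↔ IsMinimal Γ A := Finset.mem_filter_univ A
  have hpack : IsPacking 2 𝓑 := fun P hP A hA B hB =>
    hψ.eq_of_isMinimal_of_subset hnc hnr hhom hP ((mem_blocks A).1 hA) ((mem_blocks B).1 hB)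
  have hsized : (𝓑 : Set (Finset (Fin 7))).Sized 3 := fun A hA => hhom A ((mem_blocks A).1 hA)
  have hint : (𝓑 : Set (Finset (Fin 7))).Intersecting := fun A hA B hB =>
    ((mem_blocks A).1 hA).not_disjoint hmono hnc ((mem_blocks B).1 hB)
  have hsat : ∀ A ∉ 𝓑, #A = 3 → ∃ B ∈ 𝓑, Disjoint A B := by
    simp only [mem_blocks]
    exact fun A hA hcard => exists_isMinimal_disjoint hnc hhom hcard hA
  have hseven : #𝓑 * 5 = 35 := hpack.card_mul_eq_choose rfl hsized hint hsat
  constructor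
  · rw [show {A | IsMinimal Γ A} = (𝓑 : Set (Finset (Fin 7))) by simp [h𝓑], Set.ncard_coe_finset]
    omega
  · intro P hP
    simpa only [mem_blocks] using hpack.existsUnique rfl hsized hint hsat hP
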